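/- Let μ = 2λ/(1+λ²) with λ > 0, let g, V, r₀ ∈ ℝ with V ≠ 0, and define ρ(s) = r₀·V / (−g·r₀ + exp(μ·s·V)·(g·r₀ + V)). Define φ : ℝ → ℝ by φ(z) = (exp(z) − 1)/z for z ≠ 0 and φ(0) = 1. Let t ∈ ℝ be such that the denominator of ρ(s) is nonzero for all s between 0 and t and such that μ·t·φ(μ·t·V)·g·r₀ + exp(μ·t·V) > 0. Then μ·( t·V + g·∫₀ᵗ ρ(s) ds ) = log( μ·t·φ(μ·t·V)·g·r₀ + exp(μ·t·V) ). -/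

import Mathlib

open intervalIntegral

theorem dissipative_log_form
    (lam g V r₀ : ℝ) (hlam : 0 < lam) (hV : V ≠ 0)
    (μ : ℝ) (hμ : μ = 2 * lam / (1 + lam ^ 2))
    (ρ : ℝ → ℝ)
    (hρ : ∀ s : ℝ, ρ s = r₀ * V / (-g * r₀ + Real.exp (μ * s * V) * (g * r₀ + V)))
    (φ : ℝ → ℝ)
    (hφ : ∀ z : ℝ, φ z = if z = 0 then 1 else (Real.exp z - 1) / z)
    (t : ℝ)
    (hden : ∀ s ∈ Set.uIcc (0:ℝ) t, -g * r₀ + Real.exp (μ * s * V) * (g * r₀ + V) ≠ 0)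
    (hpos : 0 < μ * t * φ (μ * t * V) * g * r₀ + Real.exp (μ * t * V)) :
    μ * (t * V + g * ∫ s in (0:ℝ)..t, ρ s)
      = Real.log (μ * t * φ (μ * t * V) * g * r₀ + Real.exp (μ * t * V)) := by
  have hμ0 : μ ≠ 0 := by rw [hμ]; positivity
  have hdt := hden t Set.right_mem_uIcc
  have harg : μ * t * φ (μ * t * V) * g * r₀ + Real.exp (μ * t * V)
      = (-g * r₀ + Real.exp (μ * t * V) * (g * r₀ + V)) / V := by
    rw [hφ]
    by_cases ht : t = 0
    · subst ht
      simp [hV]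
    · have hz : μ * t * V ≠ 0 := mul_ne_zero (mul_ne_zero hμ0 ht) hV
      rw [if_neg hz]
      generalize Real.exp (μ * t * V) = e
      field_simp
      ring
  have hcD : Continuous fun s : ℝ => -g * r₀ + Real.exp (μ * s * V) * (g * r₀ + V) := by
    fun_prop
  have hρc : ContinuousOn ρ (Set.uIcc 0 t) := by
    have : ρ = fun s => r₀ * V / (-g * r₀ + Real.exp (μ * s * V) * (g * r₀ + V)) := funext hρ
    rw [this]
    exact continuousOn_const.div hcD.continuousOn hden
  have hint : IntervalIntegrable ρ MeasureTheory.volume 0 t := hρc.intervalIntegrable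
  have hderiv : ∀ s ∈ Set.uIcc (0:ℝ) t, HasDerivAt
      (fun s : ℝ => Real.log (-g * r₀ + Real.exp (μ * s * V) * (g * r₀ + V)))
      (μ * (V + g * ρ s)) s := by
    intro s hs
    have hd := hden s hs
    have h1 : HasDerivAt (fun s : ℝ => μ * s * V) (μ * 1 * V) s :=
      ((hasDerivAt_id s).const_mul μ).mul_const V
    have h2 := ((h1.exp.mul_const (g * r₀ + V)).const_add (-g * r₀)).log hd
    convert h2 using 1
    have hm : ρ s * (-g * r₀ + Real.exp (μ * s * V) * (g * r₀ + V)) = r₀ * V := by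
      rw [hρ, div_mul_cancel₀ _ hd]
    rw [eq_div_iff hd]
    linear_combination μ * g * hm
  have hftc := integral_eq_sub_of_hasDerivAt hderiv
    (((intervalIntegrable_const (c := V)).add (hint.const_mul g)).const_mul μ)
  rw [intervalIntegral.integral_const_mul,
    intervalIntegral.integral_add intervalIntegrable_const (hint.const_mul g),
    intervalIntegral.integral_const_mul, intervalIntegral.integral_const] at hftc
  rw [harg, Real.log_div hdt hV]
  simpa using hftc
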